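/- For the unit square 𝕌 with the Euclidean topology: (i) for the full homeomorphism group 𝒢_𝕌, the family {cl(𝒢_𝕌·x) : x ∈ 𝕌} of closures of orbits has exactly 2 elements (i.e. h(𝒢_𝕌, 𝕌) = 1); (ii) for every subgroup G of the homeomorphism group of 𝕌, the family {cl(G·x) : x ∈ 𝕌} is either infinite or has at least 2 elements; (iii) for every natural number n ≥ 1 there exists a subgroup G of the homeomorphism group of 𝕌 whose family {cl(G·x) : x ∈ 𝕌} has exactly n + 1 elements; and (iv) there exists a subgroup G for which this family is infinite. Equivalently, P_h(𝕌) = {n : n ≥ 1} ∪ {+∞}. -/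

import Mathlib

open Set

/-- The unit interval `[0,1]` with its Euclidean (subspace) topology. -/
local notation "𝕀" => unitInterval

/-- The group of self-homeomorphisms of a topological space, under composition. -/
instance homeoGroup {X : Type*} [TopologicalSpace X] : Group (X ≃ₜ X) where
  mul f g := g.trans f
  one := Homeomorph.refl X
  inv := Homeomorph.symm
  mul_assoc _ _ _ := rfl
  one_mul _ := Homeomorph.ext fun _ => rfl
  mul_one _ := Homeomorph.ext fun _ => rfl
  inv_mul_cancel := Homeomorph.self_trans_symm

/-- The family of closures of orbits of a subgroup `G` of the homeomorphism group of
the unit square `[0,1] × [0,1]` with the topology induced from the Euclidean plane. -/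
def orbitClosures (G : Subgroup ((𝕀 × 𝕀) ≃ₜ (𝕀 × 𝕀))) : Set (Set (𝕀 × 𝕀)) :=
  {S | ∃ x : 𝕀 × 𝕀, S = closure {y | ∃ g ∈ G, g x = y}}

/-!
The boundary circle of a closed disc `X` is invariant under every homeomorphism, since it consists
of the points whose removal leaves a simply connected space: the disc minus a boundary point is
convex, while around an interior point `q` the function `z - q` has no continuous logarithm.
Hence a boundary point and an interior point always have different orbit closures.

For a finite set `F` of interior points, consider the homeomorphisms of `X` fixing `F` pointwise.
They act transitively on the boundary, by rotations which fade out before reaching `F`, and on the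
interior minus `F`, because that set is open and connected and a small perturbation of the identity
supported in a ball carries the centre of the ball to any other of its points. As the interior minus
`F` is dense, the orbit closures are `X`, the boundary and the singletons in `F`, so there are
`|F| + 2` of them.
-/

open Metric Topology MulAction
open scoped NNReal

section HomeomorphismAction

variable {X Y : Type*} [TopologicalSpace X] [TopologicalSpace Y]

/-- The tautological action of the homeomorphism group of a space, which gives a meaning to
`MulAction.orbit` and `fixingSubgroup` for groups of homeomorphisms. -/
instance homeoMulAction : MulAction (X ≃ₜ X) X where
  smul g x := g x
  one_smul _ := rfl
  mul_smul _ _ _ := rfl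

/-- The family of closures of the orbits of a group of homeomorphisms; the height of the group is
one less than the number of its members. -/
def orbitClosureFamily (G : Subgroup (X ≃ₜ X)) : Set (Set X) :=
  range fun x ↦ closure (orbit G x)

theorem mem_orbit_iff_exists_mem {G : Subgroup (X ≃ₜ X)} {x y : X} :
    y ∈ orbit G x ↔ ∃ g ∈ G, g x = y :=
  ⟨fun ⟨g, hg⟩ ↦ ⟨g, g.2, hg⟩, fun ⟨g, hg, hgx⟩ ↦ ⟨⟨g, hg⟩, hgx⟩⟩

theorem mem_orbit_fixingSubgroup_iff {F : Set X} {x y : X} :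
    y ∈ orbit (fixingSubgroup (X ≃ₜ X) F) x ↔ ∃ g : X ≃ₜ X, EqOn g id F ∧ g x = y := by
  simp only [mem_orbit_iff_exists_mem, mem_fixingSubgroup_iff]
  rfl

theorem orbit_fixingSubgroup_of_mem {F : Set X} {x : X} (hx : x ∈ F) :
    orbit (fixingSubgroup (X ≃ₜ X) F) x = {x} := by
  refine Subset.antisymm ?_ (singleton_subset_iff.2 (mem_orbit_self x))
  rintro _ ⟨g, rfl⟩
  exact (mem_fixingSubgroup_iff _).1 g.2 x hx

theorem image_singleton_subset_orbitClosureFamily [T1Space X] (F : Set X) :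
    singleton '' F ⊆ orbitClosureFamily (fixingSubgroup (X ≃ₜ X) F) := by
  rintro _ ⟨x, hx, rfl⟩
  exact ⟨x, by simp only [orbit_fixingSubgroup_of_mem hx, closure_singleton]⟩

theorem infinite_orbitClosureFamily_fixingSubgroup [T1Space X] {F : Set X}
    (hF : F.Infinite) : (orbitClosureFamily (fixingSubgroup (X ≃ₜ X) F)).Infinite :=
  (hF.image singleton_injective.injOn).mono (image_singleton_subset_orbitClosureFamily F)

theorem mem_orbit_fixingSubgroup_of_homeomorph (e : X ≃ₜ Y) {F : Set X} {x y : X}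
    (h : e y ∈ orbit (fixingSubgroup (Y ≃ₜ Y) (e '' F)) (e x)) :
    y ∈ orbit (fixingSubgroup (X ≃ₜ X) F) x := by
  obtain ⟨g, hfix, hgx⟩ := mem_orbit_fixingSubgroup_iff.1 h
  refine mem_orbit_fixingSubgroup_iff.2 ⟨(e.trans g).trans e.symm, fun z hz ↦ ?_, ?_⟩
  · simp [hfix (mem_image_of_mem e hz)]
  · simp [hgx]

theorem mem_orbit_fixingSubgroup_of_coe {S : Set X} {F : Set S} {x y : S}
    (h : (y : X) ∈ orbit (fixingSubgroup (X ≃ₜ X) (Sᶜ ∪ (↑) '' F)) (x : X)) :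
    y ∈ orbit (fixingSubgroup (S ≃ₜ S) F) x := by
  obtain ⟨g, hfix, hgx⟩ := mem_orbit_fixingSubgroup_iff.1 h
  obtain ⟨hfixS, hfixF⟩ := eqOn_union.1 hfix
  have hmaps : ∀ z, z ∈ S ↔ g z ∈ S := fun z ↦ by
    refine not_iff_not.1 ⟨fun hz ↦ ?_, fun hgz ↦ ?_⟩
    · rwa [hfixS hz]
    · rwa [← g.injective (hfixS hgz)]
  exact mem_orbit_fixingSubgroup_iff.2 ⟨g.subtype hmaps,
    fun z hz ↦ Subtype.ext (hfixF (mem_image_of_mem _ hz)), Subtype.ext hgx⟩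

theorem exists_homeomorph_eq_smul_self {Γ : Type*} [Group Γ] [TopologicalSpace Γ]
    [ContinuousInv Γ] [MulAction Γ X] [ContinuousSMul Γ X] {f : X → Γ}
    (hf : Continuous f) (hinv : ∀ (γ : Γ) (x : X), f (γ • x) = f x) :
    ∃ h : X ≃ₜ X, ∀ x, h x = f x • x :=
  ⟨{ toFun := fun x ↦ f x • x
     invFun := fun x ↦ (f x)⁻¹ • x
     left_inv := fun x ↦ by simp [hinv]
     right_inv := fun x ↦ by simp [hinv] }, fun _ ↦ rfl⟩

end HomeomorphismAction

section Homogeneity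

variable {E : Type*} [NormedAddCommGroup E] [NormedSpace ℝ E]

theorem isConnected_ball_sdiff_of_one_lt_rank (hE : 1 < Module.rank ℝ E) (c : E) {r : ℝ}
    (hr : 0 < r) {F : Set E} (hF : F.Countable) :
    IsConnected (ball c r \ F) := by
  let φ := OpenPartialHomeomorph.univBall c r
  have hinj : Function.Injective φ := injOn_univ.1 (by simpa [φ] using φ.injOn)
  have hrange : range φ = ball c r := by
    rw [← image_univ, ← OpenPartialHomeomorph.univBall_source c r, φ.image_source_eq_target,
      OpenPartialHomeomorph.univBall_target c hr]
  rw [← hrange, sdiff_eq, inter_comm, ← image_preimage_eq_inter_range]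
  exact ((hF.preimage hinj).isConnected_compl_of_one_lt_rank hE).image _
    (OpenPartialHomeomorph.continuous_univBall c r).continuousOn

variable [CompleteSpace E]

theorem exists_homeomorph_eq_add_of_lipschitzWith {k : E → E} {c : ℝ≥0} (hk : LipschitzWith c k)
    (hc : c < 1) : ∃ h : E ≃ₜ E, ∀ x, h x = x + k x := by
  have happrox : ApproximatesLinearOn (fun x ↦ x + k x)
      (ContinuousLinearEquiv.refl ℝ E : E →L[ℝ] E) univ c := by
    intro x _ y _
    simpa [add_sub_add_comm, add_sub_cancel_left, dist_eq_norm] using hk.dist_le_mul x y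
  refine ⟨happrox.toHomeomorph _ ?_, fun x ↦ rfl⟩
  refine or_iff_not_imp_left.2 fun h ↦ ?_
  rw [not_subsingleton_iff_nontrivial] at h
  have : ‖((ContinuousLinearEquiv.refl ℝ E).symm : E →L[ℝ] E)‖₊ = 1 :=
    NNReal.eq ContinuousLinearMap.norm_id
  rwa [this, inv_one]

theorem exists_homeomorph_apply_eq_of_dist_lt {p q : E} {r : ℝ} (hpq : dist q p < r) :
    ∃ h : E ≃ₜ E, h p = q ∧ ∀ x, r ≤ dist x p → h x = x := by
  have hr : 0 < r := dist_nonneg.trans_lt hpq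
  let v : E := r⁻¹ • (q - p)
  let bump : E → ℝ := fun x ↦ max 0 (r - dist x p)
  have hv : ‖v‖₊ < 1 := by
    rw [← NNReal.coe_lt_coe, coe_nnnorm, norm_smul, norm_inv, Real.norm_of_nonneg hr.le,
      ← dist_eq_norm, NNReal.coe_one, inv_mul_lt_one₀ hr]
    exact hpq
  have hbump : LipschitzWith 1 bump := by
    simpa using ((LipschitzWith.const r).sub (LipschitzWith.dist_left p)).const_max 0
  have hk : LipschitzWith ‖v‖₊ fun x ↦ bump x • v := by
    have hcomp := (ContinuousLinearMap.toSpanSingleton ℝ v).lipschitz.comp hbump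
    rwa [ContinuousLinearMap.nnnorm_toSpanSingleton, mul_one] at hcomp
  obtain ⟨h, hh⟩ := exists_homeomorph_eq_add_of_lipschitzWith hk hv
  refine ⟨h, by simp [hh, bump, v, hr.le, smul_smul, hr.ne'], fun x hx ↦ ?_⟩
  simp [hh, bump, hx]

theorem subset_orbit_fixingSubgroup_compl {U : Set E} (hUo : IsOpen U) (hU : IsPreconnected U)
    {x : E} (hx : x ∈ U) : U ⊆ orbit (fixingSubgroup (E ≃ₜ E) Uᶜ) x := by
  intro y hy
  refine hU.induction₂ (fun a b ↦ b ∈ orbit (fixingSubgroup (E ≃ₜ E) Uᶜ) a)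
    (fun a ha ↦ ?_) (fun a b c _ _ _ hab hbc ↦ ?_) (fun a b _ _ hab ↦ ?_) hx hy
  · obtain ⟨r, hr, hrU⟩ := isOpen_iff.1 hUo a ha
    filter_upwards [mem_nhdsWithin_of_mem_nhds (ball_mem_nhds a hr)] with b hb
    obtain ⟨h, hab, hfix⟩ := exists_homeomorph_apply_eq_of_dist_lt hb
    exact mem_orbit_fixingSubgroup_iff.2
      ⟨h, fun z hz ↦ hfix z (not_lt.1 fun hzr ↦ hz (hrU hzr)), hab⟩
  · rwa [← orbit_eq_iff.2 hab]
  · rwa [mem_orbit_symm]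

end Homogeneity

section Boundary

theorem isSimplyConnected_compl_singleton_of_mem_extremePoints {E : Type*} [AddCommGroup E]
    [Module ℝ E] [TopologicalSpace E] [ContinuousAdd E] [ContinuousSMul ℝ E] {S : Set E}
    (hS : Convex ℝ S) (hS' : S.Nontrivial) {p : S} (hp : (p : E) ∈ S.extremePoints ℝ) :
    IsSimplyConnected ({p}ᶜ : Set S) := by
  have hconv : Convex ℝ (S \ {(p : E)}) := (hS.mem_extremePoints_iff_convex_sdiff.1 hp).2
  have hne : (S \ {(p : E)}).Nonempty := hS'.exists_ne p
  have himage : ((↑) : S → E) '' {p}ᶜ = S \ {(p : E)} := by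
    rw [image_compl_eq_range_sdiff_image Subtype.val_injective, Subtype.range_coe,
      image_singleton]
  rw [← IsEmbedding.subtypeVal.isSimplyConnected_image, himage]
  have := hconv.contractibleSpace hne
  exact SimplyConnectedSpace.ofContractible _

theorem log_lift_circleMap_sub {r : ℝ} {L : ℝ → ℂ} (hL : Continuous L)
    (hexp : ∀ θ, Complex.exp (L θ) = circleMap 0 r θ) :
    L (2 * Real.pi) - L 0 = 2 * Real.pi * Complex.I := by
  have hlift : L = fun θ : ℝ ↦ L 0 + θ * Complex.I := by
    refine Complex.isCoveringMap_exp.eq_of_comp_eq hL (by fun_prop) ?_ 0 (by simp)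
    ext θ
    simp [hexp, Complex.exp_add, circleMap]
  rw [hlift]
  simp

theorem not_isSimplyConnected_compl_singleton_of_mem_interior {S : Set ℂ}
    [LocallyPathConnectedSpace S] {q : S} (hq : (q : ℂ) ∈ interior S) :
    ¬ IsSimplyConnected ({q}ᶜ : Set S) := by
  intro h
  obtain ⟨r, hr, hrS⟩ := nhds_basis_closedBall.mem_iff.1 (mem_interior_iff_mem_nhds.1 hq)
  obtain ⟨log, hlog, hexp⟩ := Complex.exists_continuousOn_eqOn_exp_comp h isOpen_compl_singleton
    (g := fun z : S ↦ (z : ℂ) - q) (by fun_prop)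
    (by rintro ⟨z, hz, hzq⟩; exact hz (Subtype.ext (sub_eq_zero.1 hzq)))
  let γ : ℝ → S := fun θ ↦ ⟨circleMap q r θ, hrS (circleMap_mem_closedBall _ hr.le θ)⟩
  have hγ : Continuous γ := (continuous_circleMap _ r).subtype_mk _
  have hγq : ∀ θ, γ θ ∈ ({q}ᶜ : Set S) := fun θ hθ ↦
    circleMap_ne_center hr.ne' (congrArg Subtype.val hθ)
  have hwind := log_lift_circleMap_sub (hlog.comp_continuous hγ hγq) fun θ ↦ by
    simpa [γ, circleMap] using hexp (hγq θ)
  have hloop : γ (2 * Real.pi) = γ 0 := Subtype.ext (by simp [γ, circleMap])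
  simp [hloop, Real.pi_ne_zero] at hwind

/-- The boundary of a topological disc, characterized without reference to a parametrization as
the set of points whose removal leaves a simply connected space. -/
def discBoundary (X : Type*) [TopologicalSpace X] : Set X :=
  {p | IsSimplyConnected ({p}ᶜ : Set X)}

variable {X Y : Type*} [TopologicalSpace X] [TopologicalSpace Y]

theorem apply_mem_discBoundary_iff (e : X ≃ₜ Y) {x : X} :
    e x ∈ discBoundary Y ↔ x ∈ discBoundary X := by
  have hpre : e ⁻¹' {e x}ᶜ = {x}ᶜ := by simp [preimage_compl, ← image_singleton]
  rw [discBoundary, mem_ofPred_eq, ← e.isSimplyConnected_preimage, hpre]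
  rfl

theorem orbit_subset_discBoundary (G : Subgroup (X ≃ₜ X)) {x : X} (hx : x ∈ discBoundary X) :
    orbit G x ⊆ discBoundary X := by
  rintro _ ⟨g, rfl⟩
  exact (apply_mem_discBoundary_iff g.1).2 hx

end Boundary

section ClosedDisc

/-- The closed unit disc, as a subspace of the complex plane. -/
abbrev ClosedDisc : Type := closedBall (0 : ℂ) 1

theorem mem_discBoundary_closedDisc_iff {z : ClosedDisc} :
    z ∈ discBoundary ClosedDisc ↔ ‖(z : ℂ)‖ = 1 := by
  have hconv : Convex ℝ (closedBall (0 : ℂ) 1) := convex_closedBall 0 1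
  constructor
  · intro hz
    by_contra hne
    have := Convex.locallyPathConnectedSpace ℂ hconv
    refine not_isSimplyConnected_compl_singleton_of_mem_interior ?_ hz
    rw [interior_closedBall _ one_ne_zero, mem_ball_zero_iff]
    exact (mem_closedBall_zero_iff.1 z.2).lt_of_ne hne
  · intro hz
    refine isSimplyConnected_compl_singleton_of_mem_extremePoints hconv
      ⟨0, by simp, 1, by simp, zero_ne_one⟩ ?_
    exact StrictConvexSpace.sphere_subset_extremePoints_closedBall 0 one_ne_zero
      (mem_sphere_zero_iff_norm.2 hz)

theorem mem_orbit_fixingSubgroup_of_norm_lt_one {F : Set ClosedDisc} (hF : F.Finite)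
    {z w : ClosedDisc} (hz : z ∉ F) (hz' : ‖(z : ℂ)‖ < 1) (hw : w ∉ F) (hw' : ‖(w : ℂ)‖ < 1) :
    w ∈ orbit (fixingSubgroup (ClosedDisc ≃ₜ ClosedDisc) F) z := by
  let U : Set ℂ := ball 0 1 \ (↑) '' F
  have hF' : ((↑) '' F : Set ℂ).Finite := hF.image _
  have hU : IsPreconnected U := (isConnected_ball_sdiff_of_one_lt_rank
    (by simp [Complex.rank_real_complex]) 0 one_pos hF'.countable).isPreconnected
  have hmem : ∀ v : ClosedDisc, v ∉ F → ‖(v : ℂ)‖ < 1 → (v : ℂ) ∈ U := fun v hv hv' ↦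
    ⟨mem_ball_zero_iff.2 hv', fun h ↦ hv (Subtype.val_injective.mem_set_image.1 h)⟩
  refine mem_orbit_fixingSubgroup_of_coe ?_
  have hfix : fixingSubgroup (ℂ ≃ₜ ℂ) Uᶜ ≤
      fixingSubgroup (ℂ ≃ₜ ℂ) ((closedBall 0 1)ᶜ ∪ ((↑) : ClosedDisc → ℂ) '' F) := by
    refine fixingSubgroup_antitone _ _ (union_subset ?_ ?_)
    · exact compl_subset_compl.2 (sdiff_subset.trans ball_subset_closedBall)
    · exact fun v hv hvU ↦ hvU.2 hv
  obtain ⟨g, hg⟩ := subset_orbit_fixingSubgroup_compl (isOpen_ball.sdiff hF'.isClosed) hU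
    (hmem z hz hz') (hmem w hw hw')
  exact ⟨⟨g, hfix g.2⟩, hg⟩

theorem mem_orbit_fixingSubgroup_of_norm_eq_one {F : Set ClosedDisc} (hF : IsClosed F)
    (hF' : ∀ v ∈ F, ‖(v : ℂ)‖ ≠ 1) {z w : ClosedDisc} (hz : ‖(z : ℂ)‖ = 1)
    (hw : ‖(w : ℂ)‖ = 1) :
    w ∈ orbit (fixingSubgroup (ClosedDisc ≃ₜ ClosedDisc) F) z := by
  let norms : Set ℝ := (fun v : ClosedDisc ↦ ‖(v : ℂ)‖) '' F
  have hnorms : IsClosed norms := (hF.isCompact.image (by fun_prop)).isClosed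
  have hdisj : Disjoint norms {1} := by simpa [norms] using hF'
  obtain ⟨χ, hχF, hχ1, -⟩ :=
    exists_continuous_zero_one_of_isClosed hnorms isClosed_singleton hdisj
  let θ : ℝ := Complex.arg (w / z)
  obtain ⟨h, hh⟩ := exists_homeomorph_eq_smul_self
    (f := fun v : ℂ ↦ Circle.exp (χ ‖v‖ * θ)) (by fun_prop) (by simp [Circle.norm_smul])
  have hnorm : ∀ v, ‖h v‖ = ‖v‖ := fun v ↦ by rw [hh, Circle.norm_smul]
  let g : ClosedDisc ≃ₜ ClosedDisc := h.subtype fun v ↦ by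
    rw [mem_closedBall_zero_iff, mem_closedBall_zero_iff, hnorm]
  have hg : ∀ v : ClosedDisc, (g v : ℂ) = Circle.exp (χ ‖(v : ℂ)‖ * θ) • (v : ℂ) := fun v ↦ hh v
  refine mem_orbit_fixingSubgroup_iff.2 ⟨g, fun v hv ↦ Subtype.ext ?_, Subtype.ext ?_⟩
  · have : χ ‖(v : ℂ)‖ = 0 := hχF ⟨v, hv, rfl⟩
    simp [hg, this]
  · have hχz : χ ‖(z : ℂ)‖ = 1 := hχ1 hz
    have hz0 : (z : ℂ) ≠ 0 := norm_ne_zero_iff.1 (by simp [hz])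
    have hrot : Complex.exp (θ * Complex.I) = w / z := by
      simpa [θ, hz, hw] using Complex.norm_mul_exp_arg_mul_I (w / z : ℂ)
    rw [hg, hχz, one_mul, Circle.smul_def, Circle.coe_exp, hrot, smul_eq_mul,
      div_mul_cancel₀ _ hz0]

end ClosedDisc

section TopologicalDisc

variable {X : Type*} [TopologicalSpace X] (e : X ≃ₜ ClosedDisc)
include e

theorem mem_discBoundary_iff_norm_eq_one {x : X} : x ∈ discBoundary X ↔ ‖(e x : ℂ)‖ = 1 := by
  rw [← apply_mem_discBoundary_iff e, mem_discBoundary_closedDisc_iff]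

theorem notMem_discBoundary_iff_norm_lt_one {x : X} : x ∉ discBoundary X ↔ ‖(e x : ℂ)‖ < 1 := by
  rw [mem_discBoundary_iff_norm_eq_one e, (mem_closedBall_zero_iff.1 (e x).2).lt_iff_ne]

theorem isClosed_discBoundary : IsClosed (discBoundary X) := by
  have : discBoundary X = {x | ‖(e x : ℂ)‖ = 1} :=
    Set.ext fun x ↦ mem_discBoundary_iff_norm_eq_one e
  rw [this]
  exact isClosed_eq (by fun_prop) continuous_const

theorem discBoundary_nonempty : (discBoundary X).Nonempty :=
  ⟨e.symm ⟨1, by simp⟩, by simp [mem_discBoundary_iff_norm_eq_one e]⟩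

theorem dense_compl_discBoundary : Dense (discBoundary X)ᶜ := by
  have hball : Dense ((↑) ⁻¹' ball (0 : ℂ) 1 : Set ClosedDisc) := by
    rw [Subtype.dense_iff]
    intro z hz
    rwa [Subtype.image_preimage_coe, inter_eq_self_of_subset_right ball_subset_closedBall,
      closure_ball _ one_ne_zero]
  have hpre : (discBoundary X)ᶜ = e ⁻¹' ((↑) ⁻¹' ball (0 : ℂ) 1) := by
    ext x
    simp [notMem_discBoundary_iff_norm_lt_one e]
  rw [hpre]
  exact hball.preimage e.isOpenMap

theorem dense_compl_discBoundary_union {F : Set X} (hF : F.Finite) :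
    Dense (discBoundary X ∪ F)ᶜ := by
  have : ConnectedSpace ClosedDisc :=
    isConnected_iff_connectedSpace.1 ((convex_closedBall _ _).isConnected ⟨0, by simp⟩)
  have : Nontrivial ClosedDisc := ⟨⟨0, by simp⟩, ⟨1, by simp⟩, by simp [Subtype.ext_iff]⟩
  have := e.symm.t1Space
  have := e.symm.surjective.connectedSpace e.symm.continuous
  have := e.symm.injective.nontrivial
  rw [compl_union]
  exact (dense_compl_discBoundary e).sdiff_finite hF

theorem compl_discBoundary_union_nonempty {F : Set X} (hF : F.Finite) :
    (discBoundary X ∪ F)ᶜ.Nonempty :=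
  have : Nonempty X := ⟨e.symm ⟨0, by simp⟩⟩
  (dense_compl_discBoundary_union e hF).nonempty

theorem infinite_compl_discBoundary : (discBoundary X)ᶜ.Infinite := by
  intro hfin
  obtain ⟨x, hx⟩ := compl_discBoundary_union_nonempty e hfin
  simp at hx

theorem orbit_fixingSubgroup_of_mem_discBoundary {F : Set X} (hF : IsClosed F)
    (hF' : Disjoint F (discBoundary X)) {x : X} (hx : x ∈ discBoundary X) :
    orbit (fixingSubgroup (X ≃ₜ X) F) x = discBoundary X := by
  refine (orbit_subset_discBoundary _ hx).antisymm fun y hy ↦ ?_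
  refine mem_orbit_fixingSubgroup_of_homeomorph e
    (mem_orbit_fixingSubgroup_of_norm_eq_one (e.isClosed_image.2 hF) ?_
      ((mem_discBoundary_iff_norm_eq_one e).1 hx) ((mem_discBoundary_iff_norm_eq_one e).1 hy))
  rintro _ ⟨z, hz, rfl⟩ h
  exact disjoint_left.1 hF' hz ((mem_discBoundary_iff_norm_eq_one e).2 h)

theorem orbit_fixingSubgroup_of_notMem {F : Set X} (hF : F.Finite) {x : X}
    (hx : x ∉ discBoundary X) (hxF : x ∉ F) :
    orbit (fixingSubgroup (X ≃ₜ X) F) x = (discBoundary X ∪ F)ᶜ := by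
  refine Subset.antisymm ?_ fun y hy ↦ ?_
  · rintro _ ⟨g, rfl⟩
    rw [compl_union]
    exact ⟨(apply_mem_discBoundary_iff g.1).not.2 hx,
      (SubMulAction.ofFixingSubgroup (X ≃ₜ X) F).smul_mem g hxF⟩
  · rw [compl_union] at hy
    exact mem_orbit_fixingSubgroup_of_homeomorph e
      (mem_orbit_fixingSubgroup_of_norm_lt_one (hF.image e) (e.injective.mem_set_image.not.2 hxF)
        ((notMem_discBoundary_iff_norm_lt_one e).1 hx) (e.injective.mem_set_image.not.2 hy.2)
        ((notMem_discBoundary_iff_norm_lt_one e).1 hy.1))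

theorem orbitClosureFamily_fixingSubgroup {F : Set X} (hF : F.Finite)
    (hF' : Disjoint F (discBoundary X)) :
    orbitClosureFamily (fixingSubgroup (X ≃ₜ X) F) =
      insert univ (insert (discBoundary X) (singleton '' F)) := by
  have := e.symm.t1Space
  have hbdry : ∀ x ∈ discBoundary X,
      closure (orbit (fixingSubgroup (X ≃ₜ X) F) x) = discBoundary X := fun x hx ↦ by
    rw [orbit_fixingSubgroup_of_mem_discBoundary e hF.isClosed hF' hx,
      (isClosed_discBoundary e).closure_eq]
  have hgeneric : ∀ x ∉ discBoundary X, x ∉ F →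
      closure (orbit (fixingSubgroup (X ≃ₜ X) F) x) = univ := fun x hx hxF ↦ by
    rw [orbit_fixingSubgroup_of_notMem e hF hx hxF,
      (dense_compl_discBoundary_union e hF).closure_eq]
  refine Subset.antisymm ?_ (insert_subset ?_ (insert_subset ?_
    (image_singleton_subset_orbitClosureFamily F)))
  · rintro _ ⟨x, rfl⟩
    by_cases hx : x ∈ discBoundary X
    · exact .inr (.inl (hbdry x hx))
    by_cases hxF : x ∈ F
    · exact .inr (.inr ⟨x, hxF, by simp only [orbit_fixingSubgroup_of_mem hxF, closure_singleton]⟩)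
    · exact .inl (hgeneric x hx hxF)
  · obtain ⟨x, hx⟩ := compl_discBoundary_union_nonempty e hF
    rw [compl_union] at hx
    exact ⟨x, hgeneric x hx.1 hx.2⟩
  · obtain ⟨x, hx⟩ := discBoundary_nonempty e
    exact ⟨x, hbdry x hx⟩

theorem finite_and_ncard_orbitClosureFamily_fixingSubgroup {F : Set X} (hF : F.Finite)
    (hF' : Disjoint F (discBoundary X)) :
    (orbitClosureFamily (fixingSubgroup (X ≃ₜ X) F)).Finite ∧
      (orbitClosureFamily (fixingSubgroup (X ≃ₜ X) F)).ncard = F.ncard + 2 := by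
  obtain ⟨b, hb⟩ := discBoundary_nonempty e
  obtain ⟨c, hc⟩ := (infinite_compl_discBoundary e).nonempty
  have hpts : (singleton '' F : Set (Set X)).Finite := hF.image _
  have hbdry : discBoundary X ∉ (singleton '' F : Set (Set X)) := by
    rintro ⟨p, hp, hpX⟩
    exact disjoint_left.1 hF' hp (hpX ▸ mem_singleton p)
  have huniv : univ ∉ insert (discBoundary X) (singleton '' F : Set (Set X)) := by
    rintro (h | ⟨p, hp, hpX⟩)
    · exact hc (h ▸ mem_univ c)
    · have hbp : b ∈ ({p} : Set X) := hpX ▸ mem_univ b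
      exact disjoint_left.1 hF' hp (mem_singleton_iff.1 hbp ▸ hb)
  rw [orbitClosureFamily_fixingSubgroup e hF hF']
  refine ⟨(hpts.insert _).insert _, ?_⟩
  rw [ncard_insert_of_notMem huniv (hpts.insert _),
    ncard_insert_of_notMem hbdry hpts, ncard_image_of_injective _ singleton_injective]

theorem two_le_ncard_orbitClosureFamily {G : Subgroup (X ≃ₜ X)}
    (hG : (orbitClosureFamily G).Finite) : 2 ≤ (orbitClosureFamily G).ncard := by
  obtain ⟨b, hb⟩ := discBoundary_nonempty e
  obtain ⟨c, hc⟩ := (infinite_compl_discBoundary e).nonempty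
  refine (one_lt_ncard hG).2 ⟨_, ⟨b, rfl⟩, _, ⟨c, rfl⟩, fun (h : closure _ = closure _) ↦ hc ?_⟩
  have hbG := closure_minimal (orbit_subset_discBoundary G hb) (isClosed_discBoundary e)
  exact hbG (h ▸ subset_closure (mem_orbit_self c))

end TopologicalDisc

section Square

theorem nonempty_homeomorph_closedBall {E : Type*} [NormedAddCommGroup E] [NormedSpace ℝ E]
    {s : Set E} (hs : Convex ℝ s) (hclosed : IsClosed s) (hbdd : Bornology.IsBounded s)
    (hint : (interior s).Nonempty) : Nonempty (s ≃ₜ closedBall (0 : E) 1) := by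
  obtain ⟨h, -, hcl, -⟩ :=
    exists_homeomorph_image_interior_closure_frontier_eq_unitBall hs hint hbdd
  rw [hclosed.closure_eq] at hcl
  exact ⟨(h.image s).trans (.setCongr hcl)⟩

theorem nonempty_square_homeomorph_closedDisc :
    Nonempty ((𝕀 × 𝕀) ≃ₜ ClosedDisc) := by
  let square : Set ℂ := Icc 0 1 ×ℂ Icc 0 1
  have hconv : Convex ℝ square :=
    ((convex_Icc 0 1).linear_preimage Complex.reLm).inter
      ((convex_Icc 0 1).linear_preimage Complex.imLm)
  have hint : (interior square).Nonempty := by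
    rw [Complex.interior_reProdIm, interior_Icc]
    exact ⟨⟨1 / 2, 1 / 2⟩, by norm_num, by norm_num⟩
  obtain ⟨h⟩ := nonempty_homeomorph_closedBall hconv (isClosed_Icc.reProdIm isClosed_Icc)
    ((isBounded_Icc 0 1).reProdIm (isBounded_Icc 0 1)) hint
  have hsquare : square ≃ₜ (𝕀 ×ˢ 𝕀 : Set (ℝ × ℝ)) :=
    Complex.equivRealProdCLM.toHomeomorph.subtype fun _ ↦ Iff.rfl
  exact ⟨(Homeomorph.Set.prod 𝕀 𝕀).symm.trans (hsquare.symm.trans h)⟩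

theorem orbitClosures_eq_orbitClosureFamily (G : Subgroup ((𝕀 × 𝕀) ≃ₜ (𝕀 × 𝕀))) :
    orbitClosures G = orbitClosureFamily G := by
  ext S
  have horbit (x : 𝕀 × 𝕀) : {y | ∃ g ∈ G, g x = y} = orbit G x :=
    Set.ext fun y ↦ mem_orbit_iff_exists_mem.symm
  simp only [orbitClosures, orbitClosureFamily, horbit]
  exact exists_congr fun _ ↦ eq_comm

end Square

theorem unit_square_heights_general {X : Type*} [TopologicalSpace X] (e : X ≃ₜ ClosedDisc) :
    ((orbitClosureFamily (⊤ : Subgroup (X ≃ₜ X))).Finite ∧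
      (orbitClosureFamily (⊤ : Subgroup (X ≃ₜ X))).ncard = 2) ∧
    (∀ G : Subgroup (X ≃ₜ X), (orbitClosureFamily G).Finite → 2 ≤ (orbitClosureFamily G).ncard) ∧
    (∀ n : ℕ, 1 ≤ n → ∃ G : Subgroup (X ≃ₜ X),
      (orbitClosureFamily G).Finite ∧ (orbitClosureFamily G).ncard = n + 1) ∧
    (∃ G : Subgroup (X ≃ₜ X), (orbitClosureFamily G).Infinite) := by
  have := e.symm.t1Space
  refine ⟨?_, fun G ↦ two_le_ncard_orbitClosureFamily e, fun n hn ↦ ?_,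
    fixingSubgroup (X ≃ₜ X) (discBoundary X)ᶜ,
    infinite_orbitClosureFamily_fixingSubgroup (infinite_compl_discBoundary e)⟩
  · simpa only [fixingSubgroup_empty, ncard_empty, zero_add] using
      finite_and_ncard_orbitClosureFamily_fixingSubgroup e finite_empty (empty_disjoint _)
  · obtain ⟨F, hFX, hF, hcard⟩ := (infinite_compl_discBoundary e).exists_subset_ncard_eq (n - 1)
    obtain ⟨hfin, hncard⟩ := finite_and_ncard_orbitClosureFamily_fixingSubgroup e hF
      (subset_compl_iff_disjoint_right.1 hFX)
    exact ⟨_, hfin, by omega⟩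

/-- `P_h(𝕌) = {n : n ≥ 1} ∪ {+∞}`: (i) the full homeomorphism group of the Euclidean
unit square has exactly 2 closures of orbits, i.e. height 1; (ii) every subgroup has
infinitely many, or at least 2, closures of orbits; (iii) for every `n ≥ 1` some
subgroup has exactly `n + 1` closures of orbits (height `n`); and (iv) some subgroup
has infinitely many closures of orbits (height `+∞`). -/
theorem unit_square_heights :
    ((orbitClosures ⊤).Finite ∧ (orbitClosures ⊤).ncard = 2) ∧
    (∀ G, (orbitClosures G).Finite → 2 ≤ (orbitClosures G).ncard) ∧
    (∀ n : ℕ, 1 ≤ n → ∃ G, (orbitClosures G).Finite ∧ (orbitClosures G).ncard = n + 1) ∧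
    (∃ G, (orbitClosures G).Infinite) := by
  obtain ⟨e⟩ := nonempty_square_homeomorph_closedDisc
  simpa only [orbitClosures_eq_orbitClosureFamily] using unit_square_heights_general e
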